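/- With f₃(z) = Σ_{n=1}^∞ z^n/n^{n+1} and G(p) = s₂'(1+p) − s₁'(1+p) as above, for all real x > 1/e: ∫_0^∞ e^{-xz} f₃(z) dz = x^{-2} ∫_0^∞ G(ln(1+t)) / ((t e + e − x^{-1})(t+1)) dt. -/

import Mathlib

open MeasureTheory Set

lemma aux_gamma (k : ℕ) (r : ℝ) (hr : 0 < r) :
    IntegrableOn (fun t : ℝ => t ^ k * Real.exp (-(r * t))) (Ioi 0) ∧
    ∫ t in Ioi (0:ℝ), t ^ k * Real.exp (-(r * t)) = (k.factorial : ℝ) / r ^ (k+1) := by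
  have h : ∫ t in Ioi (0:ℝ), t ^ k * Real.exp (-(r * t)) = (k.factorial : ℝ) / r ^ (k+1) := by
    have := Real.integral_rpow_mul_exp_neg_mul_Ioi (a := (k:ℝ)+1) (r := r) (by positivity) hr
    rw [Real.Gamma_nat_eq_factorial] at this
    simp only [add_sub_cancel_right, Real.rpow_natCast] at this
    rw [this]
    have e : ((k:ℝ)+1) = ((k+1 : ℕ) : ℝ) := by push_cast; rfl
    rw [e, Real.rpow_natCast, one_div, inv_pow]
    field_simp
  refine ⟨?_, h⟩
  apply MeasureTheory.Integrable.of_integral_ne_zero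
  rw [h]
  positivity

lemma aux_inj2 : InjOn (fun s : ℝ => s - Real.log s) (Ioi 1) := by
  apply StrictMonoOn.injOn
  apply strictMonoOn_of_deriv_pos (convex_Ioi 1)
  · intro s hs
    have : s ≠ 0 := by have : (1:ℝ) < s := hs; positivity
    exact (continuousAt_id.sub (Real.continuousAt_log this)).continuousWithinAt
  · intro s hs
    rw [interior_Ioi] at hs
    have h1 : (1:ℝ) < s := hs
    have h := ((hasDerivAt_id s).sub (Real.hasDerivAt_log (by positivity : s ≠ 0))).deriv
    have h' : deriv (fun s : ℝ => s - Real.log s) s = 1 - s⁻¹ := h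
    rw [h']
    have := inv_lt_one_of_one_lt₀ h1
    linarith

lemma aux_inj1 : InjOn (fun s : ℝ => s - Real.log s) (Ioo 0 1) := by
  apply StrictAntiOn.injOn
  apply strictAntiOn_of_deriv_neg (convex_Ioo 0 1)
  · intro s hs
    exact (continuousAt_id.sub (Real.continuousAt_log hs.1.ne')).continuousWithinAt
  · intro s hs
    rw [interior_Ioo] at hs
    have h := ((hasDerivAt_id s).sub (Real.hasDerivAt_log hs.1.ne')).deriv
    have h' : deriv (fun s : ℝ => s - Real.log s) s = 1 - s⁻¹ := h
    rw [h']
    have := (one_lt_inv₀ hs.1).2 hs.2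
    linarith

lemma aux_gt (s : ℝ) (h0 : 0 < s) (h1 : s ≠ 1) : 1 < s - Real.log s := by
  have := Real.log_lt_sub_one_of_pos h0 h1
  linarith

lemma aux_deriv (U : Set ℝ) (hU : IsOpen U) (h0 : ∀ s ∈ U, 0 < s ∧ s ≠ 1)
    (hinj : InjOn (fun s : ℝ => s - Real.log s) U) (g : ℝ → ℝ)
    (hg : ∀ t : ℝ, 1 < t → g t ∈ U ∧ g t - Real.log (g t) = t) (s : ℝ) (hs : s ∈ U) :
    deriv g (s - Real.log s) = (1 - s⁻¹)⁻¹ := by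
  have hs0 := (h0 s hs).1
  have hd : HasStrictDerivAt (fun s : ℝ => s - Real.log s) (1 - s⁻¹) s :=
    (hasStrictDerivAt_id s).sub (Real.hasStrictDerivAt_log hs0.ne')
  have hne : (1 - s⁻¹) ≠ 0 := by
    intro h
    have : s⁻¹ = 1 := by linarith
    exact (h0 s hs).2 (inv_eq_one.1 this)
  have hl := hd.to_localInverse hne
  have hr := hd.hasStrictFDerivAt_equiv hne
  have e1 := hr.eventually_right_inverse
  have e2 : ∀ᶠ y in nhds (s - Real.log s), hd.localInverse _ _ _ hne y ∈ U := by
    have hc := hl.hasDerivAt.continuousAt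
    apply hc.eventually_mem
    have : hd.localInverse _ _ _ hne (s - Real.log s) = s := hr.localInverse_apply_image
    rw [this]
    exact hU.mem_nhds hs
  have e3 : ∀ᶠ y in nhds (s - Real.log s), 1 < y :=
    lt_mem_nhds (aux_gt s hs0 (h0 s hs).2)
  have : g =ᶠ[nhds (s - Real.log s)] hd.localInverse _ _ _ hne := by
    filter_upwards [e1, e2, e3] with y h1 h2 h3
    apply hinj (hg y h3).1 h2
    exact (hg y h3).2.trans h1.symm
  exact (hl.hasDerivAt.congr_of_eventuallyEq this).deriv

lemma aux_cov (U : Set ℝ) (hU : IsOpen U) (h0 : ∀ s ∈ U, 0 < s ∧ s ≠ 1)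
    (hinj : InjOn (fun s : ℝ => s - Real.log s) U) (g : ℝ → ℝ)
    (hg : ∀ t : ℝ, 1 < t → g t ∈ U ∧ g t - Real.log (g t) = t)
    (σ : ℝ) (hσ : ∀ s ∈ U, |1 - s⁻¹| = σ * (1 - s⁻¹)) (y : ℝ)
    (hF : IntegrableOn (fun s : ℝ => (Real.exp s / s - y)⁻¹) U) :
    IntegrableOn (fun t : ℝ => deriv g (1 + Real.log (1 + t)) /
            ((t * Real.exp 1 + Real.exp 1 - y) * (t + 1))) (Ioi 0) ∧
    ∫ t in Ioi (0:ℝ), deriv g (1 + Real.log (1 + t)) /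
            ((t * Real.exp 1 + Real.exp 1 - y) * (t + 1)) =
      σ * ∫ s in U, (Real.exp s / s - y)⁻¹ := by
  set ψ : ℝ → ℝ := fun s => Real.exp (s - Real.log s - 1) - 1 with hψ
  have himg : ψ '' U = Ioi 0 := by
    ext t
    constructor
    · rintro ⟨s, hs, rfl⟩
      have := aux_gt s (h0 s hs).1 (h0 s hs).2
      have : 1 < Real.exp (s - Real.log s - 1) := Real.one_lt_exp_iff.2 (by linarith)
      simp only [hψ, mem_Ioi]; linarith
    · intro ht
      have ht : 0 < t := ht
      have := Real.log_pos (by linarith : 1 < 1 + t)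
      obtain ⟨a, b⟩ := hg (1 + Real.log (1+t)) (by linarith)
      refine ⟨_, a, ?_⟩
      simp only [hψ]
      rw [b, add_sub_cancel_left, Real.exp_log (by linarith)]; ring
  have hψd : ∀ s ∈ U, HasDerivWithinAt ψ (Real.exp (s - Real.log s - 1) * (1 - s⁻¹)) U s := by
    intro s hs
    have := ((((hasDerivAt_id s).sub (Real.hasDerivAt_log (h0 s hs).1.ne')).sub_const 1).exp).sub_const 1
    exact this.hasDerivWithinAt
  have hψi : InjOn ψ U := by
    intro a ha b hb hab
    apply hinj ha hb
    simp only [hψ] at hab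
    have := Real.exp_injective (by linarith : Real.exp (a - Real.log a - 1) = Real.exp (b - Real.log b - 1))
    simp only; linarith
  have hcongr : ∀ s ∈ U, |Real.exp (s - Real.log s - 1) * (1 - s⁻¹)| •
      (deriv g (1 + Real.log (1 + ψ s)) /
            ((ψ s * Real.exp 1 + Real.exp 1 - y) * (ψ s + 1))) =
      σ * (Real.exp s / s - y)⁻¹ := by
    intro s hs
    have hs0 := (h0 s hs).1
    have hne : (1 - s⁻¹) ≠ 0 := by
      intro h
      have : s⁻¹ = 1 := by linarith
      exact (h0 s hs).2 (inv_eq_one.1 this)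
    have e1 : 1 + Real.log (1 + ψ s) = s - Real.log s := by
      simp [hψ]
    have e2 : ψ s * Real.exp 1 + Real.exp 1 - y = Real.exp s / s - y := by
      simp only [hψ]
      have : Real.exp (s - Real.log s - 1) = Real.exp s / s / Real.exp 1 := by
        rw [Real.exp_sub, Real.exp_sub, Real.exp_log hs0]
      rw [this]
      have := Real.exp_ne_zero 1
      field_simp
      ring
    have e3 : ψ s + 1 = Real.exp (s - Real.log s - 1) := by simp [hψ]
    rw [e1, e2, e3, aux_deriv U hU h0 hinj g hg s hs, abs_mul, Real.abs_exp, hσ s hs, smul_eq_mul]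
    have := Real.exp_ne_zero (s - Real.log s - 1)
    generalize Real.exp (s - Real.log s - 1) = E at *
    generalize (1 - s⁻¹) = D at *
    rw [div_eq_mul_inv, mul_inv]
    generalize (Real.exp s / s - y)⁻¹ = Q
    field_simp
  constructor
  · rw [← himg, integrableOn_image_iff_integrableOn_abs_deriv_smul hU.measurableSet hψd hψi,
      integrableOn_congr_fun hcongr hU.measurableSet]
    exact hF.const_mul σ
  · rw [← himg, integral_image_eq_integral_abs_deriv_smul hU.measurableSet hψd hψi,
      setIntegral_congr_fun hU.measurableSet hcongr, integral_const_mul]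

lemma aux_le (s : ℝ) : s * Real.exp (-s) ≤ (Real.exp 1)⁻¹ := by
  have h := Real.add_one_le_exp (s - 1)
  rw [← Real.exp_neg]
  calc s * Real.exp (-s) ≤ Real.exp (s-1) * Real.exp (-s) := by
        gcongr; linarith
    _ = Real.exp (-1) := by rw [← Real.exp_add]; congr 1; ring

lemma aux_pow (n : ℕ) (s : ℝ) : s ^ (n+1) * Real.exp (-(((n:ℝ)+1) * s)) = (s * Real.exp (-s)) ^ (n+1) := by
  rw [mul_pow, ← Real.exp_nat_mul]; congr 2; push_cast; ring

lemma aux_c (n : ℕ) : ((n+1).factorial : ℝ) / ((n:ℝ)+1) ^ (n+2) ≤ ((Real.exp 1)⁻¹) ^ n := by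
  obtain ⟨i1, e1⟩ := aux_gamma (n+1) ((n:ℝ)+1) (by positivity)
  obtain ⟨i2, e2⟩ := aux_gamma 1 1 one_pos
  rw [← e1]
  have : ((Real.exp 1)⁻¹) ^ n = ∫ t in Ioi (0:ℝ), ((Real.exp 1)⁻¹) ^ n * (t ^ 1 * Real.exp (-(1 * t))) := by
    rw [integral_const_mul, e2]; simp
  rw [this]
  apply setIntegral_mono_on i1 (i2.const_mul _) measurableSet_Ioi
  intro s hs
  have hs : 0 < s := hs
  rw [aux_pow, pow_succ, pow_one, one_mul]
  gcongr
  exact aux_le s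

lemma aux_sum (x : ℝ) (hx : 1 / Real.exp 1 < x) :
    Summable (fun n : ℕ => ((n+1).factorial : ℝ) / ((n:ℝ)+1) ^ (n+2) * (x⁻¹) ^ (n+2)) := by
  have hx0 : 0 < x := lt_trans (by positivity) hx
  have hr : (Real.exp 1)⁻¹ * x⁻¹ < 1 := by
    rw [← div_eq_mul_inv, div_lt_one hx0]; simpa using hx
  refine Summable.of_nonneg_of_le (fun n => by positivity) (fun n => ?_)
    ((summable_geometric_of_lt_one (by positivity) hr).mul_right ((x⁻¹)^2))
  calc _ ≤ ((Real.exp 1)⁻¹) ^ n * (x⁻¹) ^ (n+2) := by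
        gcongr; exact aux_c n
    _ = _ := by rw [mul_pow, pow_add]; ring

lemma aux_lhs (x : ℝ) (hx : 1 / Real.exp 1 < x) :
    (∫ z in Ioi (0 : ℝ),
        Real.exp (-x * z) * ∑' n : ℕ, z ^ (n + 1) / ((n + 1 : ℝ) ^ (n + 2))) =
    ∑' n : ℕ, ((n+1).factorial : ℝ) / ((n:ℝ)+1) ^ (n+2) * (x⁻¹) ^ (n+2) := by
  have hx0 : 0 < x := lt_trans (by positivity) hx
  set F : ℕ → ℝ → ℝ := fun n z => (((n:ℝ)+1) ^ (n+2))⁻¹ * (z ^ (n+1) * Real.exp (-(x * z))) with hFd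
  have hi : ∀ n, Integrable (F n) (volume.restrict (Ioi 0)) := fun n =>
    (aux_gamma (n+1) x hx0).1.const_mul _
  have hv : ∀ n, ∫ z in Ioi (0:ℝ), F n z =
      ((n+1).factorial : ℝ) / ((n:ℝ)+1) ^ (n+2) * (x⁻¹) ^ (n+2) := by
    intro n
    simp only [hFd]
    rw [integral_const_mul, (aux_gamma (n+1) x hx0).2, inv_pow]
    field_simp
  have hn : ∀ n, ∫ z in Ioi (0:ℝ), ‖F n z‖ = ∫ z in Ioi (0:ℝ), F n z := by
    intro n
    apply setIntegral_congr_fun measurableSet_Ioi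
    intro z hz
    have hz : 0 < z := hz
    exact Real.norm_of_nonneg (by simp only [hFd]; positivity)
  have h := hasSum_integral_of_summable_integral_norm hi (by simp_rw [hn, hv]; exact aux_sum x hx)
  simp_rw [hv] at h
  rw [h.tsum_eq]
  congr 1
  ext z
  rw [← tsum_mul_left]
  congr 1
  ext n
  simp only [hFd]
  rw [neg_mul]
  ring

lemma aux_bound (x : ℝ) (hx : 1 / Real.exp 1 < x) (s : ℝ) (hs : 0 < s) :
    0 ≤ s * Real.exp (-s) * x⁻¹ ∧ s * Real.exp (-s) * x⁻¹ ≤ (Real.exp 1)⁻¹ * x⁻¹ ∧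
    (Real.exp 1)⁻¹ * x⁻¹ < 1 ∧
    (Real.exp s / s - x⁻¹)⁻¹ = s * Real.exp (-s) * (1 - s * Real.exp (-s) * x⁻¹)⁻¹ := by
  have hx0 : 0 < x := lt_trans (by positivity) hx
  have hr : (Real.exp 1)⁻¹ * x⁻¹ < 1 := by
    rw [← div_eq_mul_inv, div_lt_one hx0]; simpa using hx
  refine ⟨by positivity, by gcongr; exact aux_le s, hr, ?_⟩
  have h : Real.exp s / s - x⁻¹ = (s * Real.exp (-s))⁻¹ * (1 - s * Real.exp (-s) * x⁻¹) := by
    rw [Real.exp_neg]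
    have := Real.exp_ne_zero s
    field_simp
  rw [h, mul_inv, inv_inv]

lemma aux_int (x : ℝ) (hx : 1 / Real.exp 1 < x) :
    IntegrableOn (fun s : ℝ => (Real.exp s / s - x⁻¹)⁻¹) (Ioi 0) := by
  have h := (aux_gamma 1 1 one_pos).1.mul_const (1 - (Real.exp 1)⁻¹ * x⁻¹)⁻¹
  refine Integrable.mono' h (by
    apply Measurable.aestronglyMeasurable; fun_prop) ?_
  filter_upwards [ae_restrict_mem measurableSet_Ioi] with s hs
  have hs : 0 < s := hs
  obtain ⟨a, b, c, d⟩ := aux_bound x hx s hs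
  have p1 : 0 < 1 - (Real.exp 1)⁻¹ * x⁻¹ := by linarith
  have p2 : 0 < 1 - s * Real.exp (-s) * x⁻¹ := by linarith
  rw [d, Real.norm_of_nonneg (by positivity), pow_one, one_mul]
  gcongr

lemma aux_rhs (x : ℝ) (hx : 1 / Real.exp 1 < x) :
    x⁻¹ ^ 2 * ∫ s in Ioi (0 : ℝ), (Real.exp s / s - x⁻¹)⁻¹ =
    ∑' n : ℕ, ((n+1).factorial : ℝ) / ((n:ℝ)+1) ^ (n+2) * (x⁻¹) ^ (n+2) := by
  have hx0 : 0 < x := lt_trans (by positivity) hx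
  set F : ℕ → ℝ → ℝ := fun n z => (x⁻¹) ^ (n+2) * (z ^ (n+1) * Real.exp (-(((n:ℝ)+1) * z))) with hFd
  have hp : ∀ n : ℕ, (0:ℝ) < (n:ℝ)+1 := fun n => by positivity
  have hi : ∀ n, Integrable (F n) (volume.restrict (Ioi 0)) := fun n =>
    (aux_gamma (n+1) _ (hp n)).1.const_mul _
  have hv : ∀ n, ∫ z in Ioi (0:ℝ), F n z =
      ((n+1).factorial : ℝ) / ((n:ℝ)+1) ^ (n+2) * (x⁻¹) ^ (n+2) := by
    intro n
    simp only [hFd]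
    rw [integral_const_mul, (aux_gamma (n+1) _ (hp n)).2]
    ring
  have hn : ∀ n, ∫ z in Ioi (0:ℝ), ‖F n z‖ = ∫ z in Ioi (0:ℝ), F n z := by
    intro n
    apply setIntegral_congr_fun measurableSet_Ioi
    intro z hz
    have hz : 0 < z := hz
    exact Real.norm_of_nonneg (by simp only [hFd]; positivity)
  have h := hasSum_integral_of_summable_integral_norm hi (by simp_rw [hn, hv]; exact aux_sum x hx)
  simp_rw [hv] at h
  rw [h.tsum_eq, ← integral_const_mul]
  apply setIntegral_congr_fun measurableSet_Ioi
  intro s hs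
  have hs : 0 < s := hs
  obtain ⟨a, b, c, d⟩ := aux_bound x hx s hs
  simp only
  rw [d, ← tsum_geometric_of_lt_one a (by linarith), ← tsum_mul_left, ← tsum_mul_left]
  congr 1
  ext n
  simp only [hFd]
  rw [aux_pow, mul_pow _ x⁻¹]
  ring

/-- With `f₃(z) = Σ_{n≥1} z^n/n^{n+1}` and `G(p) = s₂'(1+p) - s₁'(1+p)` (inverse branches of
`s - ln s`), for real `x > 1/e`:
`∫_0^∞ e^{-xz} f₃(z) dz = x^{-2} ∫_0^∞ G(ln(1+t)) / ((te + e - x^{-1})(t+1)) dt`. -/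
theorem stmt11 (s₁ s₂ : ℝ → ℝ)
    (h₁ : ∀ t : ℝ, 1 < t → s₁ t ∈ Ioo (0 : ℝ) 1 ∧ s₁ t - Real.log (s₁ t) = t)
    (h₂ : ∀ t : ℝ, 1 < t → s₂ t ∈ Ioi (1 : ℝ) ∧ s₂ t - Real.log (s₂ t) = t)
    (x : ℝ) (hx : 1 / Real.exp 1 < x) :
    (∫ z in Ioi (0 : ℝ),
        Real.exp (-x * z) * ∑' n : ℕ, z ^ (n + 1) / ((n + 1 : ℝ) ^ (n + 2))) =
      x⁻¹ ^ 2 *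
        ∫ t in Ioi (0 : ℝ),
          (deriv s₂ (1 + Real.log (1 + t)) - deriv s₁ (1 + Real.log (1 + t))) /
            ((t * Real.exp 1 + Real.exp 1 - x⁻¹) * (t + 1)) := by
  have hF := aux_int x hx
  have u1 : Ioo (0:ℝ) 1 ⊆ Ioi 0 := fun s hs => hs.1
  have u2 : Ioi (1:ℝ) ⊆ Ioi 0 := fun s hs => lt_trans (one_pos : (0:ℝ) < 1) (show 1 < s from hs)
  obtain ⟨i1, e1⟩ := aux_cov (Ioo 0 1) isOpen_Ioo (fun s hs => ⟨hs.1, hs.2.ne⟩) aux_inj1 s₁ h₁ (-1)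
    (fun s hs => by
      have := (one_lt_inv₀ hs.1).2 hs.2
      rw [abs_of_neg (by linarith)]; ring) x⁻¹ (hF.mono_set u1)
  obtain ⟨i2, e2⟩ := aux_cov (Ioi 1) isOpen_Ioi (fun s hs => ⟨u2 hs, (ne_of_lt hs).symm⟩) aux_inj2 s₂ h₂ 1
    (fun s hs => by
      have := inv_lt_one_of_one_lt₀ (show 1 < s from hs)
      rw [abs_of_pos (by linarith)]; ring) x⁻¹ (hF.mono_set u2)
  simp_rw [sub_div]
  rw [integral_sub i2 i1, e1, e2, aux_lhs x hx, ← aux_rhs x hx]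
  congr 1
  have hs : ∫ s in Ioi (0:ℝ), (Real.exp s / s - x⁻¹)⁻¹ =
      (∫ s in Ioc (0:ℝ) 1, (Real.exp s / s - x⁻¹)⁻¹) + ∫ s in Ioi (1:ℝ), (Real.exp s / s - x⁻¹)⁻¹ := by
    rw [← setIntegral_union Ioc_disjoint_Ioi_same measurableSet_Ioi
      (hF.mono_set fun s hs => hs.1) (hF.mono_set u2), Ioc_union_Ioi_eq_Ioi zero_le_one]
  rw [hs, integral_Ioc_eq_integral_Ioo]
  ring
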